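/- arXiv:2401.11016 — 2 statements merged into one kernel-verified Lean document; each statement's English description precedes it below -/
import Mathlib

section
/- Let $U=\{1,\dots,n\}$ be a set of items with utilities $u_1,\dots,u_n\in\mathbb{R}$. A length-$k$ ranking is a tuple $r=(r_1,\dots,r_k)$ of $k$ distinct items of $U$, and for $C\subseteq U$ its Plackett–Luce probability is $$\Pr\nolimits_{\mathrm{PL}}(r\mid C)=\prod_{t=1}^{k}\frac{\exp(u_{r_t})}{\sum_{m\in C\setminus\{r_1,\dots,r_{t-1}\}}\exp(u_m)}$$ if $\{r_1,\dots,r_k\}\subseteq C$, and $\Pr_{\mathrm{PL}}(r\mid C)=0$ otherwise; for a set $R$ of length-$k$ rankings, $\Pr_{\mathrm{PL}}(R\mid C)=\sum_{r\in R}\Pr_{\mathrm{PL}}(r\mid C)$. Let $R_{i\le \ell}$ be the set of length-$k$ rankings with item $i$ in one of the top $\ell$ positions. Let $i,j\in U$ with $u_i>u_j$, let $C\subseteq U$ with $i\in C$ and $j\notin C$, let $C_{i\to j}=(C\setminus\{i\})\cup\{j\}$, and let $0\le\ell\le k\le |C|$. Then item $i$ is at least as likely to appear in the top $\ell$ positions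 of a length-$k$ ranking with consideration set $C$ as $j$ is with consideration set $C_{i\to j}$: $$\Pr\nolimits_{\mathrm{PL}}(R_{i\le \ell}\mid C)\ \ge\ \Pr\nolimits_{\mathrm{PL}}(R_{j\le \ell}\mid C_{i\to j}),$$ and the inequality is strict whenever $1\le \ell<|C|$. -/
noncomputable section

/-- Plackett–Luce probability of the length-`k` ranking `r` (an injective tuple of items)
with utilities `u` and consideration set `C`. The items ranked before position `t` are
`(Finset.Iio t).image r`. -/
def prPL (n k : ℕ) (u : Fin n → ℝ) (r : Fin k ↪ Fin n) (C : Finset (Fin n)) : ℝ :=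
  if ∀ t : Fin k, r t ∈ C then
    ∏ t : Fin k, Real.exp (u (r t)) /
      ∑ j ∈ C \ (Finset.Iio t).image r, Real.exp (u j)
  else 0

/-- Plackett–Luce probability of a set of length-`k` rankings. -/
def prPLset (n k : ℕ) (u : Fin n → ℝ) (R : Finset (Fin k ↪ Fin n)) (C : Finset (Fin n)) : ℝ :=
  ∑ r ∈ R, prPL n k u r C

/-- The set of length-`k` rankings with item `i` in one of the top `ℓ` positions
(positions are numbered from `0`). -/
def topSet (n k : ℕ) (i : Fin n) (ℓ : ℕ) : Finset (Fin k ↪ Fin n) :=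
  Finset.univ.filter (fun r => ∃ t : Fin k, (t : ℕ) < ℓ ∧ r t = i)

end

section PlackettLuce

open Finset

variable {α : Type*} [DecidableEq α]

/-- Sequential weight of a tuple of items drawn without replacement from `C`, with choice
weights `w`. It vanishes on tuples that leave `C` or repeat an item. -/
noncomputable def seqProb (w : α → ℝ) : (k : ℕ) → (Fin k → α) → Finset α → ℝ
  | 0, _, _ => 1
  | k + 1, r, C =>
      if r 0 ∈ C then w (r 0) / (∑ a ∈ C, w a) * seqProb w k (Fin.tail r) (C.erase (r 0)) else 0

/-- Probability that an item of weight `x`, competing with the items of `D`, is not among the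
first `m` items drawn without replacement. -/
noncomputable def missProb (w : α → ℝ) (x : ℝ) : ℕ → Finset α → ℝ
  | 0, _ => 1
  | m + 1, D => ∑ a ∈ D, w a / (x + ∑ b ∈ D, w b) * missProb w x m (D.erase a)

theorem missProb_nonneg {w : α → ℝ} (hw : ∀ a, 0 < w a) {x : ℝ} (hx : 0 < x) (m : ℕ)
    (D : Finset α) : 0 ≤ missProb w x m D := by
  induction m generalizing D with
  | zero => simp [missProb]
  | succ m ih =>
    refine sum_nonneg fun a _ => mul_nonneg (div_nonneg (hw a).le ?_) (ih _)
    exact add_nonneg hx.le (sum_nonneg fun b _ => (hw b).le)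

theorem missProb_pos {w : α → ℝ} (hw : ∀ a, 0 < w a) {x : ℝ} (hx : 0 < x) (m : ℕ)
    (D : Finset α) (hm : m ≤ #D) : 0 < missProb w x m D := by
  induction m generalizing D with
  | zero => simp [missProb]
  | succ m ih =>
    have hD : D.Nonempty := card_pos.1 (by omega)
    refine sum_pos (fun a ha => mul_pos (div_pos (hw a) ?_) (ih _ ?_)) hD
    · exact add_pos_of_pos_of_nonneg hx (sum_nonneg fun b _ => (hw b).le)
    · rw [card_erase_of_mem ha]; omega

theorem missProb_anti {w : α → ℝ} (hw : ∀ a, 0 < w a) {x y : ℝ} (hx : 0 < x) (hxy : x ≤ y)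
    (m : ℕ) (D : Finset α) : missProb w y m D ≤ missProb w x m D := by
  induction m generalizing D with
  | zero => simp [missProb]
  | succ m ih =>
    refine sum_le_sum fun a _ => ?_
    have hs : 0 ≤ ∑ b ∈ D, w b := sum_nonneg fun b _ => (hw b).le
    have ha := (hw a).le
    exact mul_le_mul (div_le_div_of_nonneg_left ha (by linarith) (by linarith)) (ih _)
      (missProb_nonneg hw (hx.trans_le hxy) _ _) (div_nonneg ha (by linarith))

theorem missProb_strictAnti {w : α → ℝ} (hw : ∀ a, 0 < w a) {x y : ℝ} (hx : 0 < x) (hxy : x < y)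
    {m : ℕ} {D : Finset α} (hm : 1 ≤ m) (hmD : m ≤ #D) :
    missProb w y m D < missProb w x m D := by
  obtain ⟨m, rfl⟩ : ∃ m', m = m' + 1 := ⟨m - 1, by omega⟩
  refine sum_lt_sum_of_nonempty (card_pos.1 (by omega)) fun a ha => ?_
  have hs : 0 ≤ ∑ b ∈ D, w b := sum_nonneg fun b _ => (hw b).le
  refine mul_lt_mul (div_lt_div_of_pos_left (hw a) (by linarith) (by linarith))
    (missProb_anti hw hx hxy.le _ _) (missProb_pos hw (hx.trans hxy) _ _ ?_)
    (div_nonneg (hw a).le (by linarith))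
  rw [card_erase_of_mem ha]; omega

theorem seqProb_eq_zero_of_notMem (w : α → ℝ) {k : ℕ} (r : Fin k → α) (C : Finset α)
    {t : Fin k} (ht : r t ∉ C) : seqProb w k r C = 0 := by
  induction k generalizing C with
  | zero => exact t.elim0
  | succ k ih =>
    rw [seqProb]
    split_ifs with h0
    · obtain ⟨s, rfl⟩ := Fin.exists_succ_eq.2 (show t ≠ 0 by rintro rfl; exact ht h0)
      rw [ih (Fin.tail r) _ (t := s) fun h => ht (mem_of_mem_erase h), mul_zero]
    · rfl

theorem seqProb_eq_zero_of_not_injective (w : α → ℝ) {k : ℕ} (r : Fin k → α) (C : Finset α)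
    (hr : ¬ Function.Injective r) : seqProb w k r C = 0 := by
  induction k generalizing C with
  | zero => exact absurd (Function.injective_of_subsingleton r) hr
  | succ k ih =>
    rw [seqProb]
    split_ifs with h0
    · by_cases ht : Function.Injective (Fin.tail r)
      · have : r 0 ∈ Set.range (Fin.tail r) := by
          by_contra hmem
          apply hr
          rw [← Fin.cons_self_tail r]
          exact Fin.cons_injective_iff.2 ⟨hmem, ht⟩
        obtain ⟨s, hs⟩ := this
        rw [seqProb_eq_zero_of_notMem w (Fin.tail r) _ (t := s) (by simp [hs]), mul_zero]
      · rw [ih _ _ ht, mul_zero]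
    · rfl

theorem seqProb_of_injective (w : α → ℝ) {k : ℕ} (r : Fin k → α) (hr : Function.Injective r)
    (C : Finset α) :
    seqProb w k r C = if ∀ t, r t ∈ C then
      ∏ t, w (r t) / ∑ a ∈ C \ (Iio t).image r, w a else 0 := by
  induction k generalizing C with
  | zero => simp [seqProb]
  | succ k ih =>
    have htail : Function.Injective (Fin.tail r) := hr.comp (Fin.succ_injective k)
    have himage (t : Fin k) :
        C \ (Iio t.succ).image r = (C.erase (r 0)) \ (Iio t).image (Fin.tail r) := by
      ext a
      simp only [mem_sdiff, mem_image, mem_Iio, mem_erase, Fin.exists_fin_succ, Fin.tail,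
        Fin.succ_lt_succ_iff, Fin.succ_pos, true_and, ne_comm (a := a), not_or, ne_eq]
      tauto
    have hcond : (∀ t, r t ∈ C) ↔ r 0 ∈ C ∧ ∀ t, Fin.tail r t ∈ C.erase (r 0) := by
      simp only [Fin.forall_fin_succ, mem_erase, Fin.tail]
      refine and_congr_right fun _ => forall_congr' fun t => ?_
      exact (and_iff_right fun h => Fin.succ_ne_zero t (hr h)).symm
    have hIio : Iio (0 : Fin (k + 1)) = ∅ := by
      ext t; simp
    rw [seqProb, ih _ htail]
    simp only [hcond, Fin.prod_univ_succ, himage, hIio, image_empty, sdiff_empty, ite_and,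
      mul_ite, mul_zero]
    rfl

theorem sum_seqProb_succ [Fintype α] (w : α → ℝ) (k : ℕ) (C : Finset α)
    (p : (Fin (k + 1) → α) → Prop) [DecidablePred p] :
    ∑ r with p r, seqProb w (k + 1) r C =
      ∑ a ∈ C, w a / (∑ b ∈ C, w b) *
        ∑ r with p (Fin.cons a r : Fin (k + 1) → α), seqProb w k r (C.erase a) := by
  rw [sum_filter, ← (Fin.consEquiv fun _ : Fin (k + 1) => α).sum_comp, Fintype.sum_prod_type,
    ← sum_filter_add_sum_filter_not univ (· ∈ C), add_eq_left.2]
  · rw [filter_mem_eq_inter, univ_inter]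
    refine sum_congr rfl fun a ha => ?_
    rw [sum_filter, mul_sum]
    refine sum_congr rfl fun r _ => ?_
    simp [Fin.consEquiv, seqProb, ha]
  · refine sum_eq_zero fun a ha => sum_eq_zero fun r _ => ?_
    simp [Fin.consEquiv, seqProb, (mem_filter.1 ha).2]

theorem sum_seqProb [Fintype α] {w : α → ℝ} (hw : ∀ a, 0 < w a) (k : ℕ) (C : Finset α)
    (hk : k ≤ #C) : ∑ r, seqProb w k r C = 1 := by
  induction k generalizing C with
  | zero => simp [seqProb]
  | succ k ih =>
    have h := sum_seqProb_succ w k C (fun _ => True)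
    simp only [filter_true] at h
    have hC : C.Nonempty := card_pos.1 (by omega)
    rw [h, sum_congr rfl fun a ha => by
      rw [ih (C.erase a) (by rw [card_erase_of_mem ha]; omega), mul_one], ← sum_div]
    exact div_self (sum_pos (fun a _ => hw a) hC).ne'

theorem sum_seqProb_miss [Fintype α] {w : α → ℝ} (hw : ∀ a, 0 < w a) (i : α) {k ℓ : ℕ}
    (hℓ : ℓ ≤ k) (C : Finset α) (hi : i ∈ C) (hk : k ≤ #C) :
    ∑ r with ¬ ∃ t : Fin k, (t : ℕ) < ℓ ∧ r t = i, seqProb w k r C =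
      missProb w (w i) ℓ (C.erase i) := by
  induction ℓ generalizing k C with
  | zero => simpa [missProb] using sum_seqProb hw k C hk
  | succ ℓ ih =>
    obtain ⟨k, rfl⟩ : ∃ k', k = k' + 1 := ⟨k - 1, by omega⟩
    rw [sum_seqProb_succ, missProb, add_sum_erase C w hi, ← add_sum_erase C _ hi]
    rw [add_eq_right.2]
    · refine sum_congr rfl fun a ha => ?_
      obtain ⟨hai, haC⟩ := mem_erase.1 ha
      rw [erase_right_comm, ← ih (k := k) (by omega) (C.erase a) (mem_erase.2 ⟨hai.symm, hi⟩)
        (by rw [card_erase_of_mem haC]; omega)]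
      simp [Fin.exists_fin_succ, hai]
    · simp [Fin.exists_fin_succ]

theorem prPL_eq_seqProb (n k : ℕ) (u : Fin n → ℝ) (r : Fin k ↪ Fin n) (C : Finset (Fin n)) :
    prPL n k u r C = seqProb (fun a => Real.exp (u a)) k r C := by
  rw [seqProb_of_injective _ _ r.injective, prPL]

theorem prPLset_topSet_eq_sum (n k ℓ : ℕ) (u : Fin n → ℝ) (i : Fin n) (C : Finset (Fin n)) :
    prPLset n k u (topSet n k i ℓ) C =
      ∑ r with ∃ t : Fin k, (t : ℕ) < ℓ ∧ r t = i,
        seqProb (fun a => Real.exp (u a)) k r C := by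
  rw [prPLset, topSet]
  refine sum_bij_ne_zero (fun r _ _ => r) ?_ ?_ ?_ ?_
  · intro r hr _
    simpa using hr
  · intro r _ _ s _ _ h
    exact DFunLike.coe_injective h
  · intro r hr h0
    have hinj : Function.Injective r := by
      by_contra h
      exact h0 (seqProb_eq_zero_of_not_injective _ _ _ h)
    refine ⟨⟨r, hinj⟩, by simpa using hr, ?_, rfl⟩
    rwa [prPL_eq_seqProb]
  · intro r _ _
    exact prPL_eq_seqProb n k u r C

theorem prPLset_topSet (n k ℓ : ℕ) (u : Fin n → ℝ) (i : Fin n) (C : Finset (Fin n))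
    (hiC : i ∈ C) (hℓk : ℓ ≤ k) (hkC : k ≤ #C) :
    prPLset n k u (topSet n k i ℓ) C =
      1 - missProb (fun a => Real.exp (u a)) (Real.exp (u i)) ℓ (C.erase i) := by
  have hw (a : Fin n) : 0 < Real.exp (u a) := Real.exp_pos _
  rw [prPLset_topSet_eq_sum, ← sum_seqProb hw k C hkC, ← sum_seqProb_miss hw i hℓk C hiC hkC]
  exact eq_sub_of_add_eq (sum_filter_add_sum_filter_not _ _ _)

end PlackettLuce

/-- If `u i > u j`, `i ∈ C`, `j ∉ C` and `ℓ ≤ k ≤ |C|`, then `i` is at least as likely to be in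
the top `ℓ` positions with consideration set `C` as `j` is with `C` where `i` is replaced by `j`,
and strictly more likely unless `ℓ = 0` or `ℓ = |C|`. -/
theorem pl_top_l (n k ℓ : ℕ) (u : Fin n → ℝ) (i j : Fin n) (C : Finset (Fin n))
    (hu : u i > u j) (hiC : i ∈ C) (hjC : j ∉ C) (hℓk : ℓ ≤ k) (hkC : k ≤ C.card) :
    prPLset n k u (topSet n k i ℓ) C ≥
        prPLset n k u (topSet n k j ℓ) (insert j (C.erase i)) ∧
      (1 ≤ ℓ → ℓ < C.card →
        prPLset n k u (topSet n k i ℓ) C >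
          prPLset n k u (topSet n k j ℓ) (insert j (C.erase i))) := by
  have hj : j ∉ C.erase i := fun h => hjC (Finset.mem_of_mem_erase h)
  have hcard : (C.erase i).card + 1 = C.card := Finset.card_erase_add_one hiC
  have hw (a : Fin n) : 0 < Real.exp (u a) := Real.exp_pos _
  have hij : Real.exp (u j) < Real.exp (u i) := Real.exp_lt_exp.2 hu
  rw [prPLset_topSet n k ℓ u i C hiC hℓk hkC,
    prPLset_topSet n k ℓ u j _ (Finset.mem_insert_self _ _) hℓk
      (by rw [Finset.card_insert_of_notMem hj]; omega), Finset.erase_insert hj]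
  refine ⟨sub_le_sub_left (missProb_anti hw (hw j) hij.le _ _) 1, fun h1 hlt => ?_⟩
  exact sub_lt_sub_left (missProb_strictAnti hw (hw j) hij h1 (by omega)) 1
end

section
/- Let $U=\{1,\dots,n\}$ be a set of items, where item $a$ has utility $u_a\in\mathbb R$ and consideration probability $p_a\in(0,1]$, and let $1\le k\le n$. A length-$k$ ranking is a tuple $r=(r_1,\dots,r_k)$ of distinct items of $U$. For $C\subseteq U$ let $$\Pr\nolimits_{\mathrm{PL}}(r\mid C)=\prod_{t=1}^k\frac{\exp(u_{r_t})}{\sum_{b\in C\setminus\{r_1,\dots,r_{t-1}\}}\exp(u_b)}$$ if $\{r_1,\dots,r_k\}\subseteq C$, and $\Pr_{\mathrm{PL}}(r\mid C)=0$ otherwise. Let $$\Pr\nolimits_{\mathrm C}(C)=\frac1{z_{k,p}}\prod_{a\in C}p_a\prod_{b\in U\setminus C}(1-p_b)$$ if $|C|\ge k$, and $\Pr_{\mathrm C}(C)=0$ if $|C|<k$, where $z_{k,p}=\sum_{C\subseteq U,\,|C|\ge k}\prod_{a\in C}p_a\prod_{b\in U\setminus C}(1-p_b)$. The PL+C model (Plackett–Luce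 with consideration) assigns to a ranking $r$ the probability $\Pr_{\mathrm{PL+C}}(r)=\sum_{C\subseteq U}\Pr_{\mathrm C}(C)\Pr_{\mathrm{PL}}(r\mid C)$, and to a set $R$ of rankings the probability $\Pr_{\mathrm{PL+C}}(R)=\sum_{r\in R}\Pr_{\mathrm{PL+C}}(r)$. Let $R_{a\le\ell}$ be the set of length-$k$ rankings in which item $a$ is in one of the top $\ell$ positions. Consider two items $i,j\in U$ with $u_i>u_j$. If for some $\ell$ with $1\le\ell\le k$ and $\ell<n$ (that is, excluding only the degenerate case $\ell=k=n$, in which $R_{i\le\ell}$ and $R_{j\le\ell}$ both consist of all rankings) we have $\Pr_{\mathrm{PL+C}}(R_{i\le\ell})\le\Pr_{\mathrm{PL+C}}(R_{j\le\ell})$, then $p_i\le p_j$. -/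
noncomputable section

/-- Weight of a consideration set `C`: each item `i` in `C` is considered (probability `p i`),
each item `j` outside is not (probability `1 - p j`). -/
def considerWeight (n : ℕ) (p : Fin n → ℝ) (C : Finset (Fin n)) : ℝ :=
  (∏ i ∈ C, p i) * ∏ j ∈ Cᶜ, (1 - p j)

/-- Normalizing constant `z_{k,p}`: total weight of the consideration sets of size at least `k`. -/
def zConst (n k : ℕ) (p : Fin n → ℝ) : ℝ :=
  ∑ C ∈ Finset.univ.filter (fun C : Finset (Fin n) => k ≤ C.card), considerWeight n p C

/-- Probability of the consideration set `C`, conditioned on `|C| ≥ k`. -/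
def prC (n k : ℕ) (p : Fin n → ℝ) (C : Finset (Fin n)) : ℝ :=
  if k ≤ C.card then considerWeight n p C / zConst n k p else 0

/-- Plackett–Luce-with-consideration (PL+C) probability of the ranking `r`. -/
def prPLC (n k : ℕ) (u p : Fin n → ℝ) (r : Fin k ↪ Fin n) : ℝ :=
  ∑ C : Finset (Fin n), prC n k p C * prPL n k u r C

/-- PL+C probability of a set of rankings. -/
def prPLCset (n k : ℕ) (u p : Fin n → ℝ) (R : Finset (Fin k ↪ Fin n)) : ℝ :=
  ∑ r ∈ R, prPLC n k u p r

end

open Finset in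
/-- Plackett–Luce probability, with item weights `w`, that sequential draws from `C` produce the
sequence `f`; sequences with repetitions or items outside `C` have probability zero. -/
noncomputable def plSeq {α : Type*} [DecidableEq α] (w : α → ℝ) {k : ℕ} (f : Fin k → α)
    (C : Finset α) : ℝ :=
  open Classical in
  if Function.Injective f ∧ ∀ t, f t ∈ C then
    ∏ t : Fin k, w (f t) / ∑ j ∈ C \ (Iio t).image f, w j
  else 0

/-- Probability that item `a` is not among the first `ℓ` sequential Plackett–Luce draws
from `C`. -/
noncomputable def avoidProb {α : Type*} [DecidableEq α] (w : α → ℝ) (a : α) :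
    ℕ → Finset α → ℝ
  | 0, _ => 1
  | ℓ + 1, C => ∑ b ∈ C.erase a, w b / (∑ c ∈ C, w c) * avoidProb w a ℓ (C.erase b)

section PlackettLuce

open Finset

theorem sum_fin_succ_fun {α M : Type*} [AddCommMonoid M] [Fintype α] {k : ℕ}
    (F : (Fin (k + 1) → α) → M) : ∑ f, F f = ∑ a, ∑ f : Fin k → α, F (Fin.cons a f) := by
  rw [← Fintype.sum_prod_type', ← (Fin.consEquiv fun _ : Fin (k + 1) => α).sum_comp]
  rfl

variable {α : Type*} [DecidableEq α] {w : α → ℝ}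

theorem plSeq_cons (w : α → ℝ) {k : ℕ} (a : α) (f : Fin k → α) (C : Finset α) :
    plSeq w (Fin.cons a f : Fin (k + 1) → α) C =
      if a ∈ C then w a / (∑ c ∈ C, w c) * plSeq w f (C.erase a) else 0 := by
  have hcond : (Function.Injective (Fin.cons a f : Fin (k + 1) → α) ∧
      ∀ t, (Fin.cons a f : Fin (k + 1) → α) t ∈ C) ↔
      a ∈ C ∧ (Function.Injective f ∧ ∀ t, f t ∈ C.erase a) := by
    rw [Fin.cons_injective_iff, Fin.forall_fin_succ]
    simp only [Fin.cons_zero, Fin.cons_succ, Set.mem_range, not_exists, mem_erase, ne_eq]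
    grind
  have himage (t : Fin k) : C \ (Iio t.succ).image (Fin.cons a f : Fin (k + 1) → α) =
      C.erase a \ (Iio t).image f := by
    ext x
    simp only [mem_sdiff, mem_image, mem_Iio, mem_erase, Fin.exists_fin_succ, Fin.cons_zero,
      Fin.cons_succ, Fin.succ_lt_succ_iff, Fin.succ_pos, true_and]
    grind
  unfold plSeq
  simp only [hcond]
  by_cases ha : a ∈ C
  · simp only [ha, true_and, if_true, mul_ite, mul_zero]
    congr 1
    rw [Fin.prod_univ_succ]
    simp only [himage, Fin.cons_zero, Fin.cons_succ]
    have : Iio (0 : Fin (k + 1)) = ∅ := by ext x; simp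
    simp [this]
  · simp [ha]

theorem sum_plSeq_avoid [Fintype α] (hw : ∀ a, 0 < w a) (a : α) {k ℓ : ℕ} (hℓ : ℓ ≤ k)
    {C : Finset α} (hk : k ≤ C.card) :
    ∑ f : Fin k → α, (if ∃ t : Fin k, (t : ℕ) < ℓ ∧ f t = a then 0 else plSeq w f C) =
      avoidProb w a ℓ C := by
  induction k generalizing ℓ C with
  | zero =>
    obtain rfl : ℓ = 0 := by omega
    simp [plSeq, avoidProb, Function.injective_of_subsingleton]
  | succ k ih =>
    have hC : C.Nonempty := card_pos.mp (by omega)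
    have hpos : 0 < ∑ c ∈ C, w c := sum_pos (fun c _ => hw c) hC
    have hcard (b : α) (hb : b ∈ C) : k ≤ (C.erase b).card := by
      rw [card_erase_of_mem hb]; omega
    rw [sum_fin_succ_fun]
    cases ℓ with
    | zero =>
      have key (b : α) : (∑ f : Fin k → α, plSeq w (Fin.cons b f : Fin (k + 1) → α) C) =
          if b ∈ C then w b / ∑ c ∈ C, w c else 0 := by
        simp only [plSeq_cons]
        split_ifs with hb
        · have := ih (Nat.zero_le k) (hcard b hb)
          simp only [Nat.not_lt_zero, false_and, exists_false, if_false, avoidProb] at this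
          rw [← mul_sum, this, mul_one]
        · simp
      simp only [Nat.not_lt_zero, false_and, exists_false, if_false, avoidProb, key]
      rw [sum_ite_mem, univ_inter, ← sum_div, div_self hpos.ne']
    | succ ℓ =>
      have key (b : α) : (∑ f : Fin k → α,
          if ∃ t : Fin (k + 1), (t : ℕ) < ℓ + 1 ∧ (Fin.cons b f : Fin (k + 1) → α) t = a then 0
          else plSeq w (Fin.cons b f : Fin (k + 1) → α) C) =
          if b ∈ C.erase a then w b / (∑ c ∈ C, w c) * avoidProb w a ℓ (C.erase b) else 0 := by
        simp only [plSeq_cons, Fin.exists_fin_succ, Fin.cons_zero, Fin.cons_succ, Fin.val_zero,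
          Fin.val_succ, Nat.succ_pos, true_and, add_lt_add_iff_right, mem_erase]
        by_cases hba : b = a
        · simp [hba]
        by_cases hb : b ∈ C
        · simp only [hba, hb, false_or, ne_eq, not_false_eq_true, and_self, if_true]
          rw [← ih (by omega) (hcard b hb), mul_sum]
          simp only [mul_ite, mul_zero]
        · simp [hb]
      simp only [key, avoidProb]
      rw [sum_ite_mem, univ_inter]

theorem sum_plSeq_top [Fintype α] (hw : ∀ a, 0 < w a) (a : α) {k ℓ : ℕ} (hℓ : ℓ ≤ k)
    {C : Finset α} (hk : k ≤ C.card) :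
    ∑ f : Fin k → α, (if ∃ t : Fin k, (t : ℕ) < ℓ ∧ f t = a then plSeq w f C else 0) =
      1 - avoidProb w a ℓ C := by
  have htotal := sum_plSeq_avoid hw a (Nat.zero_le k) hk
  simp only [Nat.not_lt_zero, false_and, exists_false, if_false, avoidProb] at htotal
  rw [← sum_plSeq_avoid hw a hℓ hk, ← htotal, ← sum_sub_distrib]
  refine sum_congr rfl fun f _ => ?_
  split_ifs <;> simp

theorem avoidProb_nonneg (hw : ∀ a, 0 < w a) (a : α) (ℓ : ℕ) (C : Finset α) :
    0 ≤ avoidProb w a ℓ C := by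
  induction ℓ generalizing C with
  | zero => simp [avoidProb]
  | succ ℓ ih =>
    exact sum_nonneg fun b _ =>
      mul_nonneg (div_nonneg (hw b).le (sum_nonneg fun c _ => (hw c).le)) (ih _)

theorem avoidProb_pos (hw : ∀ a, 0 < w a) (a : α) {ℓ : ℕ} {C : Finset α} (hℓ : ℓ < C.card) :
    0 < avoidProb w a ℓ C := by
  induction ℓ generalizing C with
  | zero => simp [avoidProb]
  | succ ℓ ih =>
    have hC : 0 < ∑ c ∈ C, w c := sum_pos (fun c _ => hw c) (card_pos.mp (by omega))
    refine sum_pos (fun b hb => mul_pos (div_pos (hw b) hC) (ih ?_)) ?_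
    · rw [card_erase_of_mem (mem_of_mem_erase hb)]; omega
    · have := pred_card_le_card_erase (s := C) (a := a)
      exact card_pos.mp (by omega)

theorem avoidProb_le_one (hw : ∀ a, 0 < w a) (a : α) (ℓ : ℕ) (C : Finset α) :
    avoidProb w a ℓ C ≤ 1 := by
  induction ℓ generalizing C with
  | zero => simp [avoidProb]
  | succ ℓ ih =>
    have h0 : 0 ≤ ∑ c ∈ C, w c := sum_nonneg fun c _ => (hw c).le
    calc avoidProb w a (ℓ + 1) C ≤ ∑ b ∈ C.erase a, w b / ∑ c ∈ C, w c :=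
          sum_le_sum fun b _ => mul_le_of_le_one_right (div_nonneg (hw b).le h0) (ih _)
      _ ≤ ∑ b ∈ C, w b / ∑ c ∈ C, w c :=
          sum_le_sum_of_subset_of_nonneg (erase_subset _ _) fun b _ _ => div_nonneg (hw b).le h0
      _ ≤ 1 := by rw [← sum_div]; exact div_self_le_one _

/-- Competing against the same other items, a heavier item is avoided with lower probability. -/
theorem avoidProb_insert_le (hw : ∀ a, 0 < w a) {i j : α} (hij : w j ≤ w i) (ℓ : ℕ)
    {S : Finset α} (hi : i ∉ S) (hj : j ∉ S) :
    avoidProb w i ℓ (insert i S) ≤ avoidProb w j ℓ (insert j S) := by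
  induction ℓ generalizing S with
  | zero => simp [avoidProb]
  | succ ℓ ih =>
    simp only [avoidProb, erase_insert hi, erase_insert hj, sum_insert hi, sum_insert hj]
    have h0 : 0 ≤ ∑ c ∈ S, w c := sum_nonneg fun c _ => (hw c).le
    refine sum_le_sum fun b hb => ?_
    have hib : b ≠ i := fun h => hi (h ▸ hb)
    have hjb : b ≠ j := fun h => hj (h ▸ hb)
    rw [erase_insert_of_ne hib.symm, erase_insert_of_ne hjb.symm]
    refine mul_le_mul ?_ (ih (fun h => hi (mem_of_mem_erase h)) (fun h => hj (mem_of_mem_erase h)))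
      (avoidProb_nonneg hw _ _ _) (div_nonneg (hw b).le (add_nonneg (hw j).le h0))
    exact div_le_div_of_nonneg_left (hw b).le (add_pos_of_pos_of_nonneg (hw j) h0) (by linarith)

theorem avoidProb_succ_eq_add (w : α → ℝ) {i j : α} (hij : i ≠ j) (ℓ : ℕ) {C : Finset α}
    (hj : j ∈ C) : avoidProb w i (ℓ + 1) C =
      w j / (∑ c ∈ C, w c) * avoidProb w i ℓ (C.erase j) +
      ∑ b ∈ (C.erase i).erase j, w b / (∑ c ∈ C, w c) * avoidProb w i ℓ (C.erase b) := by
  rw [avoidProb, add_sum_erase (C.erase i)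
    (fun b => w b / (∑ c ∈ C, w c) * avoidProb w i ℓ (C.erase b)) (mem_erase.mpr ⟨hij.symm, hj⟩)]

theorem avoidProb_erase_le (hw : ∀ a, 0 < w a) {i j : α} (hne : i ≠ j) (hij : w j ≤ w i) (ℓ : ℕ)
    {C : Finset α} (hi : i ∈ C) (hj : j ∈ C) :
    avoidProb w i ℓ (C.erase j) ≤ avoidProb w j ℓ (C.erase i) := by
  have h := avoidProb_insert_le hw hij ℓ (S := (C.erase i).erase j) (by simp) (by simp)
  rwa [insert_erase (mem_erase.mpr ⟨hne.symm, hj⟩), erase_right_comm,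
    insert_erase (mem_erase.mpr ⟨hne, hi⟩)] at h

/-- Among the items of a common consideration set, a heavier one is avoided with lower
probability. -/
theorem avoidProb_le_of_mem (hw : ∀ a, 0 < w a) {i j : α} (hne : i ≠ j) (hij : w j ≤ w i) (ℓ : ℕ)
    {C : Finset α} (hi : i ∈ C) (hj : j ∈ C) :
    avoidProb w i ℓ C ≤ avoidProb w j ℓ C := by
  induction ℓ generalizing C with
  | zero => simp [avoidProb]
  | succ ℓ ih =>
    have h0 : 0 ≤ ∑ c ∈ C, w c := sum_nonneg fun c _ => (hw c).le
    rw [avoidProb_succ_eq_add w hne ℓ hj, avoidProb_succ_eq_add w hne.symm ℓ hi,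
      erase_right_comm (a := i)]
    refine add_le_add ?_ (sum_le_sum fun b hb => ?_)
    · exact mul_le_mul (div_le_div_of_nonneg_right hij h0) (avoidProb_erase_le hw hne hij ℓ hi hj)
        (avoidProb_nonneg hw _ _ _) (div_nonneg (hw i).le h0)
    · simp only [mem_erase] at hb
      exact mul_le_mul_of_nonneg_left
        (ih (mem_erase.mpr ⟨hb.1.symm, hi⟩) (mem_erase.mpr ⟨hb.2.1.symm, hj⟩))
        (div_nonneg (hw b).le h0)

theorem avoidProb_lt_of_mem (hw : ∀ a, 0 < w a) {i j : α} (hne : i ≠ j) (hij : w j < w i) {ℓ : ℕ}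
    (hℓ : 1 ≤ ℓ) {C : Finset α} (hi : i ∈ C) (hj : j ∈ C) (hC : ℓ < C.card) :
    avoidProb w i ℓ C < avoidProb w j ℓ C := by
  obtain ⟨ℓ, rfl⟩ := Nat.exists_eq_add_of_le' hℓ
  have h0 : 0 < ∑ c ∈ C, w c := sum_pos (fun c _ => hw c) ⟨i, hi⟩
  rw [avoidProb_succ_eq_add w hne ℓ hj, avoidProb_succ_eq_add w hne.symm ℓ hi,
    erase_right_comm (a := i)]
  refine add_lt_add_of_lt_of_le ?_ (sum_le_sum fun b hb => ?_)
  · refine mul_lt_mul (div_lt_div_of_pos_right hij h0)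
      (avoidProb_erase_le hw hne hij.le ℓ hi hj) (avoidProb_pos hw _ ?_)
      (div_nonneg (hw i).le h0.le)
    rw [card_erase_of_mem hj]; omega
  · simp only [mem_erase] at hb
    exact mul_le_mul_of_nonneg_left
      (avoidProb_le_of_mem hw hne hij.le ℓ (mem_erase.mpr ⟨hb.1.symm, hi⟩)
        (mem_erase.mpr ⟨hb.2.1.symm, hj⟩))
      (div_nonneg (hw b).le h0.le)

theorem avoidProb_eq_one_of_notMem (hw : ∀ a, 0 < w a) {a : α} {ℓ : ℕ} {C : Finset α}
    (ha : a ∉ C) (hℓ : ℓ ≤ C.card) : avoidProb w a ℓ C = 1 := by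
  induction ℓ generalizing C with
  | zero => simp [avoidProb]
  | succ ℓ ih =>
    have h0 : 0 < ∑ c ∈ C, w c := sum_pos (fun c _ => hw c) (card_pos.mp (by omega))
    rw [avoidProb, erase_eq_of_notMem ha, ← div_self h0.ne', sum_div]
    refine sum_congr rfl fun b hb => ?_
    rw [ih (fun h => ha (mem_of_mem_erase h)) (by rw [card_erase_of_mem hb]; omega), mul_one]

end PlackettLuce

section Consideration

open Finset

variable {n k : ℕ}

theorem sum_topSet_prPL (u : Fin n → ℝ) (a : Fin n) {ℓ : ℕ} (hℓ : ℓ ≤ k)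
    {C : Finset (Fin n)} (hk : k ≤ C.card) :
    ∑ r ∈ topSet n k a ℓ, prPL n k u r C = 1 - avoidProb (fun b => Real.exp (u b)) a ℓ C := by
  classical
  rw [← sum_plSeq_top (fun b => Real.exp_pos (u b)) a hℓ hk, ← sum_filter]
  refine sum_of_injOn (fun r => (r : Fin k → Fin n)) (DFunLike.coe_injective.injOn) ?_ ?_ ?_
  · intro r hr
    simpa [topSet] using hr
  · intro f hf hf'
    rw [plSeq, if_neg]
    rintro ⟨hinj, -⟩
    refine hf' ⟨⟨f, hinj⟩, ?_, rfl⟩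
    simpa [topSet] using hf
  · intro r _
    simp only [prPL, plSeq, r.injective, true_and]

theorem prPLCset_topSet (u p : Fin n → ℝ) (a : Fin n) {ℓ : ℕ} (hℓ : ℓ ≤ k) :
    prPLCset n k u p (topSet n k a ℓ) =
      ∑ C, prC n k p C * (1 - avoidProb (fun b => Real.exp (u b)) a ℓ C) := by
  simp only [prPLCset, prPLC]
  rw [sum_comm]
  refine sum_congr rfl fun C _ => ?_
  rw [← mul_sum]
  by_cases hC : k ≤ C.card
  · rw [sum_topSet_prPL u a hℓ hC]
  · simp [prC, hC]

theorem considerWeight_nonneg {p : Fin n → ℝ} (hp : ∀ a, 0 < p a ∧ p a ≤ 1)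
    (C : Finset (Fin n)) : 0 ≤ considerWeight n p C :=
  mul_nonneg (prod_nonneg fun a _ => (hp a).1.le)
    (prod_nonneg fun a _ => sub_nonneg.mpr (hp a).2)

theorem considerWeight_univ_pos {p : Fin n → ℝ} (hp : ∀ a, 0 < p a ∧ p a ≤ 1) :
    0 < considerWeight n p univ := by
  simpa [considerWeight] using prod_pos fun a (_ : a ∈ univ) => (hp a).1

theorem zConst_pos {p : Fin n → ℝ} (hp : ∀ a, 0 < p a ∧ p a ≤ 1) (hkn : k ≤ n) :
    0 < zConst n k p :=
  (considerWeight_univ_pos hp).trans_le <|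
    single_le_sum (f := considerWeight n p) (fun C _ => considerWeight_nonneg hp C)
      (by simpa using hkn)

theorem prC_nonneg {p : Fin n → ℝ} (hp : ∀ a, 0 < p a ∧ p a ≤ 1) (hkn : k ≤ n)
    (C : Finset (Fin n)) : 0 ≤ prC n k p C := by
  unfold prC
  split_ifs
  · exact div_nonneg (considerWeight_nonneg hp C) (zConst_pos hp hkn).le
  · exact le_rfl

theorem considerWeight_insert_eq (p : Fin n → ℝ) {i j : Fin n} (hne : i ≠ j)
    {S : Finset (Fin n)} (hi : i ∉ S) (hj : j ∉ S) :
    considerWeight n p (insert i S) =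
      p i * (1 - p j) * ((∏ a ∈ S, p a) * ∏ b ∈ (insert i (insert j S))ᶜ, (1 - p b)) := by
  have hcompl : (insert i S)ᶜ = insert j (insert i (insert j S))ᶜ := by
    ext x
    simp only [mem_compl, mem_insert]
    grind
  rw [considerWeight, hcompl, prod_insert hi, prod_insert (by simp)]
  ring

/-- Exchanging the considered item for one with a lower consideration probability lowers the
probability of the consideration set. -/
theorem prC_insert_le {p : Fin n → ℝ} (hp : ∀ a, 0 < p a ∧ p a ≤ 1) (hkn : k ≤ n)
    {i j : Fin n} (hne : i ≠ j) (hij : p j ≤ p i) {S : Finset (Fin n)} (hi : i ∉ S)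
    (hj : j ∉ S) : prC n k p (insert j S) ≤ prC n k p (insert i S) := by
  simp only [prC, card_insert_of_notMem hi, card_insert_of_notMem hj]
  split_ifs
  · refine div_le_div_of_nonneg_right ?_ (zConst_pos hp hkn).le
    rw [considerWeight_insert_eq p hne hi hj, considerWeight_insert_eq p hne.symm hj hi,
      insert_comm j i]
    refine mul_le_mul_of_nonneg_right (by linarith) ?_
    exact mul_nonneg (prod_nonneg fun a _ => (hp a).1.le)
      (prod_nonneg fun a _ => sub_nonneg.mpr (hp a).2)
  · exact le_rfl

theorem sum_finset_eq_sum_powerset_pair {α M : Type*} [Fintype α] [DecidableEq α]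
    [AddCommMonoid M] {i j : α} (hne : i ≠ j) (F : Finset α → M) :
    ∑ C, F C = ∑ S ∈ ({i, j}ᶜ : Finset α).powerset,
      (F S + F (insert j S) + (F (insert i S) + F (insert i (insert j S)))) := by
  have huniv : (univ : Finset α) = insert i (insert j ({i, j}ᶜ : Finset α)) := by
    ext x
    simp only [mem_univ, mem_insert, mem_compl, mem_singleton]
    tauto
  rw [← powerset_univ, huniv, sum_powerset_insert (by simp [hne]), sum_powerset_insert (by simp),
    sum_powerset_insert (by simp), sum_add_distrib, sum_add_distrib, sum_add_distrib]

/-- An item with higher utility and higher consideration probability is strictly more likely to be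
ranked in the top `ℓ` positions. -/
theorem prPLCset_topSet_lt {ℓ : ℕ} {u p : Fin n → ℝ} {i j : Fin n}
    (hp : ∀ a, 0 < p a ∧ p a ≤ 1) (hu : u j < u i) (hℓ : 1 ≤ ℓ) (hℓk : ℓ ≤ k) (hkn : k ≤ n)
    (hℓn : ℓ < n) (hij : p j ≤ p i) :
    prPLCset n k u p (topSet n k j ℓ) < prPLCset n k u p (topSet n k i ℓ) := by
  have hne : i ≠ j := fun h => by simp [h] at hu
  set w : Fin n → ℝ := fun b => Real.exp (u b) with hwdef
  have hw (a : Fin n) : 0 < w a := Real.exp_pos _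
  have hwij : w j < w i := Real.exp_lt_exp.mpr hu
  have habsent (a : Fin n) (C : Finset (Fin n)) (ha : a ∉ C) :
      prC n k p C * (1 - avoidProb w a ℓ C) = 0 := by
    by_cases hC : k ≤ C.card
    · rw [avoidProb_eq_one_of_notMem hw ha (hℓk.trans hC), sub_self, mul_zero]
    · simp [prC, hC]
  have hsingle {S : Finset (Fin n)} (hi : i ∉ S) (hj : j ∉ S) :
      prC n k p (insert j S) * (1 - avoidProb w j ℓ (insert j S)) ≤
        prC n k p (insert i S) * (1 - avoidProb w i ℓ (insert i S)) :=
    mul_le_mul (prC_insert_le hp hkn hne hij hi hj)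
      (sub_le_sub_left (avoidProb_insert_le hw hwij.le ℓ hi hj) 1)
      (sub_nonneg.mpr (avoidProb_le_one hw _ _ _)) (prC_nonneg hp hkn _)
  have hmem {S : Finset (Fin n)} (hS : S ∈ ({i, j}ᶜ : Finset (Fin n)).powerset) :
      i ∉ S ∧ j ∉ S := by
    rw [mem_powerset] at hS
    exact ⟨fun h => by simpa using hS h, fun h => by simpa using hS h⟩
  rw [prPLCset_topSet u p j hℓk, prPLCset_topSet u p i hℓk,
    sum_finset_eq_sum_powerset_pair hne, sum_finset_eq_sum_powerset_pair hne]
  refine sum_lt_sum (fun S hS => ?_) ⟨{i, j}ᶜ, by simp, ?_⟩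
  · obtain ⟨hi, hj⟩ := hmem hS
    have hboth := mul_le_mul_of_nonneg_left
      (sub_le_sub_left (avoidProb_le_of_mem hw hne hwij.le ℓ (C := insert i (insert j S))
        (by simp) (by simp)) 1) (prC_nonneg hp hkn (insert i (insert j S)))
    linarith [hsingle hi hj, habsent i S hi, habsent j S hj,
      habsent i (insert j S) (by simp [hne, hi]), habsent j (insert i S) (by simp [hne.symm, hj])]
  · obtain ⟨hi, hj⟩ := hmem (S := {i, j}ᶜ) (by simp)
    have huniv : insert i (insert j ({i, j}ᶜ : Finset (Fin n))) = univ := by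
      ext x
      simp only [mem_univ, mem_insert, mem_compl, mem_singleton]
      tauto
    have hpos : 0 < prC n k p univ := by
      rw [prC, if_pos (by simpa using hkn)]
      exact div_pos (considerWeight_univ_pos hp) (zConst_pos hp hkn)
    have hboth := mul_lt_mul_of_pos_left
      (sub_lt_sub_left (avoidProb_lt_of_mem hw hne hwij hℓ (mem_univ i) (mem_univ j)
        (by simpa using hℓn)) 1) hpos
    rw [huniv]
    linarith [hsingle hi hj, habsent i _ hi, habsent j _ hj,
      habsent i (insert j {i, j}ᶜ) (by simp [hne]),
      habsent j (insert i {i, j}ᶜ) (by simp [hne.symm])]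

end Consideration

/-- If `u i > u j` but `i` appears in the top `ℓ` positions with at most the probability of `j`
under PL+C, then `p i ≤ p j`. Given `ℓ ≤ k ≤ n`, the hypothesis `ℓ < n` excludes only
`ℓ = k = n`, where `R_{i≤ℓ}` is the set of all rankings for every item `i`. -/
theorem consider_flip (n k ℓ : ℕ) (u p : Fin n → ℝ) (i j : Fin n)
    (hp : ∀ a, 0 < p a ∧ p a ≤ 1) (hu : u i > u j)
    (hℓ : 1 ≤ ℓ) (hℓk : ℓ ≤ k) (hkn : k ≤ n) (hℓn : ℓ < n)
    (hflip : prPLCset n k u p (topSet n k i ℓ) ≤ prPLCset n k u p (topSet n k j ℓ)) :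
    p i ≤ p j := by
  by_contra! h
  exact (prPLCset_topSet_lt hp hu hℓ hℓk hkn hℓn h.le).not_ge hflip
end
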